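/- arXiv:2012.11947 — 3 statements merged into one kernel-verified Lean document; each statement's English description precedes it below -/
import Mathlib

section
/- For every λ ∈ (−2, 0) and every p > 0, the improper integral lim_{T→∞} ∫₀^T sin(px) x^λ dx exists and equals −(π/2) · p^{−λ−1} / (sin(πλ/2) · Γ(−λ)), where Γ is the Gamma function. -/
open Filter

/-!
Write `a = -λ ∈ (0, 2)`. Since `x ^ (-a) = Γ(a)⁻¹ ∫₀^∞ s ^ (a - 1) e ^ (-xs) ds`, Fubini's theorem
turns an integral against `x ^ (-a)` into a Mellin integral of a Laplace transform. For `sin (px)`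
on `(0, T]` that Laplace transform is explicit: it tends to `p / (s ^ 2 + p ^ 2)` as `T → ∞` and is
dominated by a constant multiple of `1 / (s ^ 2 + p ^ 2)`. So the conditionally convergent integral
has the limit `Γ(a)⁻¹ ∫₀^∞ s ^ (a - 1) p / (s ^ 2 + p ^ 2) ds`, an absolutely convergent one.

The same use of Fubini's theorem, applied to `e ^ (-cx)` on `(0, ∞)`, whose Laplace transform is
`1 / (s + c)`, evaluates `∫₀^∞ s ^ (a - 1) / (s + c) ds` through Euler's reflection formula, and a
power substitution replaces `s` by `s ^ 2`.
-/

open MeasureTheory Set Real Topology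

section LaplaceMellin

variable {E : Type*} [NormedAddCommGroup E] [NormedSpace ℝ E] {ν : Measure ℝ} {f : ℝ → E} {a : ℝ}

lemma integral_rpow_sub_one_mul_exp_neg_mul {x : ℝ} (ha : 0 < a) (hx : 0 < x) :
    ∫ s in Ioi (0 : ℝ), s ^ (a - 1) * exp (-(x * s)) = Gamma a * x ^ (-a) := by
  rw [integral_rpow_mul_exp_neg_mul_Ioi ha hx, one_div, inv_rpow hx.le, rpow_neg hx.le, mul_comm]

lemma integrableOn_rpow_sub_one_mul_exp_neg_mul {x : ℝ} (ha : 0 < a) (hx : 0 < x) :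
    IntegrableOn (fun s : ℝ => s ^ (a - 1) * exp (-(x * s))) (Ioi 0) := by
  simpa using integrableOn_rpow_mul_exp_neg_mul_rpow (s := a - 1) (by linarith) one_pos hx

lemma aestronglyMeasurable_of_rpow_smul (hν : ∀ᵐ x ∂ν, 0 < x)
    (hf : AEStronglyMeasurable (fun x => x ^ a • f x) ν) : AEStronglyMeasurable f ν := by
  have hpow : AEStronglyMeasurable (fun x : ℝ => x ^ (-a)) ν := by fun_prop
  refine (hpow.smul hf).congr ?_
  filter_upwards [hν] with x hx
  simp [smul_smul, ← rpow_add hx]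

lemma integrable_prod_rpow_mul_exp_neg_mul_smul [SFinite ν] (ha : 0 < a) (hν : ∀ᵐ x ∂ν, 0 < x)
    (hf : Integrable (fun x => x ^ (-a) • f x) ν) :
    Integrable (fun z : ℝ × ℝ => (z.2 ^ (a - 1) * exp (-(z.1 * z.2))) • f z.1)
      (ν.prod (volume.restrict (Ioi 0))) := by
  have hker : AEStronglyMeasurable (fun z : ℝ × ℝ => z.2 ^ (a - 1) * exp (-(z.1 * z.2)))
      (ν.prod (volume.restrict (Ioi 0))) := by fun_prop
  have hfm := (aestronglyMeasurable_of_rpow_smul hν hf.aestronglyMeasurable).comp_fst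
    (ν := volume.restrict (Ioi (0 : ℝ)))
  refine (integrable_prod_iff (hker.smul hfm)).2 ⟨?_, (hf.norm.const_mul (Gamma a)).congr ?_⟩
  · filter_upwards [hν] with x hx
    exact (integrableOn_rpow_sub_one_mul_exp_neg_mul ha hx).smul_const (f x)
  · filter_upwards [hν] with x hx
    calc Gamma a * ‖x ^ (-a) • f x‖
        = ∫ s in Ioi (0 : ℝ), s ^ (a - 1) * exp (-(x * s)) * ‖f x‖ := by
          rw [integral_mul_const, integral_rpow_sub_one_mul_exp_neg_mul ha hx, norm_smul,
            norm_of_nonneg (rpow_nonneg hx.le _), mul_assoc]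
      _ = ∫ s in Ioi (0 : ℝ), ‖(s ^ (a - 1) * exp (-(x * s))) • f x‖ := by
          refine setIntegral_congr_fun measurableSet_Ioi fun s (hs : 0 < s) => ?_
          have hnonneg : 0 ≤ s ^ (a - 1) * exp (-(x * s)) := by positivity
          simp only [norm_smul, norm_of_nonneg hnonneg]

theorem integral_rpow_neg_smul_eq_integral_laplace [CompleteSpace E] [SFinite ν] (ha : 0 < a)
    (hν : ∀ᵐ x ∂ν, 0 < x) (hf : Integrable (fun x => x ^ (-a) • f x) ν) :
    ∫ x, x ^ (-a) • f x ∂ν =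
      (Gamma a)⁻¹ • ∫ s in Ioi (0 : ℝ), s ^ (a - 1) • ∫ x, exp (-(x * s)) • f x ∂ν := by
  rw [eq_inv_smul_iff₀ (Gamma_pos_of_pos ha).ne']
  calc Gamma a • ∫ x, x ^ (-a) • f x ∂ν
      = ∫ x, (∫ s in Ioi (0 : ℝ), (s ^ (a - 1) * exp (-(x * s))) • f x) ∂ν := by
        rw [← integral_smul]
        refine integral_congr_ae ?_
        filter_upwards [hν] with x hx
        rw [integral_smul_const, integral_rpow_sub_one_mul_exp_neg_mul ha hx, mul_smul]
    _ = ∫ s in Ioi (0 : ℝ), ∫ x, (s ^ (a - 1) * exp (-(x * s))) • f x ∂ν :=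
        integral_integral_swap (integrable_prod_rpow_mul_exp_neg_mul_smul ha hν hf)
    _ = ∫ s in Ioi (0 : ℝ), s ^ (a - 1) • ∫ x, exp (-(x * s)) • f x ∂ν := by
        simp only [mul_smul, integral_smul]

end LaplaceMellin

section MellinInverse

variable {a b c : ℝ}

lemma integral_exp_neg_mul_mul_exp_neg_mul {s : ℝ} (hs : 0 < s + c) :
    ∫ x in Ioi (0 : ℝ), exp (-(x * s)) * exp (-(c * x)) = (s + c)⁻¹ := by
  have hexp (x : ℝ) : exp (-(x * s)) * exp (-(c * x)) = exp (-(s + c) * x) := by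
    rw [← exp_add]
    ring_nf
  simp_rw [hexp]
  rw [integral_exp_mul_Ioi (neg_neg_of_pos hs), mul_zero, exp_zero, neg_div_neg_eq, one_div]

theorem integral_rpow_mul_inv_add (ha : 0 < a) (ha1 : a < 1) (hc : 0 < c) :
    ∫ s in Ioi (0 : ℝ), s ^ (a - 1) * (s + c)⁻¹ = c ^ (a - 1) * (π / sin (π * a)) := by
  have hint : IntegrableOn (fun x : ℝ => x ^ (-a) • exp (-(c * x))) (Ioi 0) := by
    simpa using integrableOn_rpow_sub_one_mul_exp_neg_mul (a := 1 - a) (by linarith) hc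
  have hgamma : ∫ x in Ioi (0 : ℝ), x ^ (-a) • exp (-(c * x)) = Gamma (1 - a) * c ^ (a - 1) := by
    simpa using integral_rpow_sub_one_mul_exp_neg_mul (a := 1 - a) (by linarith) hc
  have hlaplace : ∫ s in Ioi (0 : ℝ), s ^ (a - 1) *
      ∫ x in Ioi (0 : ℝ), exp (-(x * s)) * exp (-(c * x)) =
        ∫ s in Ioi (0 : ℝ), s ^ (a - 1) * (s + c)⁻¹ :=
    setIntegral_congr_fun measurableSet_Ioi fun s (hs : 0 < s) => by
      simp only [integral_exp_neg_mul_mul_exp_neg_mul (add_pos hs hc)]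
  have hpos : ∀ᵐ x : ℝ ∂volume.restrict (Ioi 0), 0 < x := ae_restrict_mem measurableSet_Ioi
  have hswap := integral_rpow_neg_smul_eq_integral_laplace ha hpos hint
  rw [hgamma, eq_inv_smul_iff₀ (Gamma_pos_of_pos ha).ne'] at hswap
  simp only [smul_eq_mul, hlaplace] at hswap
  rw [← hswap, ← Gamma_mul_Gamma_one_sub]
  ring

theorem integral_rpow_mul_inv_rpow_add (ha : 0 < a) (hab : a < b) (hc : 0 < c) :
    ∫ s in Ioi (0 : ℝ), s ^ (a - 1) * (s ^ b + c)⁻¹ =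
      c ^ (a / b - 1) * (π / (b * sin (π * (a / b)))) := by
  have hb : 0 < b := ha.trans hab
  have hpow {s : ℝ} (hs : 0 < s) : s ^ (a - 1) = s ^ (b - 1) * (s ^ b) ^ (a / b - 1) := by
    rw [← rpow_mul hs.le, ← rpow_add hs]
    congr 1
    field_simp
    ring
  have hsubst : b * ∫ s in Ioi (0 : ℝ), s ^ (a - 1) * (s ^ b + c)⁻¹ =
      ∫ t in Ioi (0 : ℝ), t ^ (a / b - 1) * (t + c)⁻¹ := by
    rw [← integral_comp_rpow_Ioi_of_pos (g := fun t => t ^ (a / b - 1) * (t + c)⁻¹) hb,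
      ← integral_const_mul]
    refine setIntegral_congr_fun measurableSet_Ioi fun s (hs : 0 < s) => ?_
    simp only [hpow hs, smul_eq_mul]
    ring
  rw [integral_rpow_mul_inv_add (div_pos ha hb) ((div_lt_one hb).2 hab) hc] at hsubst
  rw [eq_div_of_mul_eq hb.ne' ((mul_comm _ _).trans hsubst), mul_div_assoc, div_div, mul_comm b]

lemma integrableOn_rpow_mul_inv_rpow_add (ha : 0 < a) (hab : a < b) (hc : 0 < c) :
    IntegrableOn (fun s : ℝ => s ^ (a - 1) * (s ^ b + c)⁻¹) (Ioi 0) := by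
  have hb : 0 < b := ha.trans hab
  have hsin : 0 < sin (π * (a / b)) := sin_pos_of_pos_of_lt_pi (by positivity)
    (mul_lt_of_lt_one_right pi_pos ((div_lt_one hb).2 hab))
  refine Integrable.of_integral_ne_zero ?_
  rw [integral_rpow_mul_inv_rpow_add ha hab hc]
  positivity

end MellinInverse

section LaplaceSin

variable {p s T : ℝ}

theorem integral_exp_neg_mul_mul_sin (h : s ^ 2 + p ^ 2 ≠ 0) :
    ∫ x in (0 : ℝ)..T, exp (-(x * s)) * sin (p * x) =
      (p - exp (-(T * s)) * (s * sin (p * T) + p * cos (p * T))) / (s ^ 2 + p ^ 2) := by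
  have hderiv (x : ℝ) : HasDerivAt
      (fun x => -(exp (-(x * s)) * (s * sin (p * x) + p * cos (p * x))) / (s ^ 2 + p ^ 2))
      (exp (-(x * s)) * sin (p * x)) x := by
    have hexp := (hasDerivAt_mul_const (x := x) s).fun_neg.exp
    have hsin := (hasDerivAt_const_mul (x := x) p).sin.const_mul s
    have hcos := (hasDerivAt_const_mul (x := x) p).cos.const_mul p
    refine ((hexp.fun_mul (hsin.fun_add hcos)).fun_neg.div_const (s ^ 2 + p ^ 2)).congr_deriv ?_
    field_simp
    ring
  rw [intervalIntegral.integral_eq_sub_of_hasDerivAt (fun x _ => hderiv x)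
    (Continuous.intervalIntegrable (by fun_prop) _ _)]
  simp only [zero_mul, neg_zero, exp_zero, mul_zero, sin_zero, cos_zero]
  ring

lemma abs_exp_mul_sin_add_cos_le (hs : 0 ≤ s) :
    |exp (-(T * s)) * (s * sin (p * T) + p * cos (p * T))| ≤ exp (-(T * s)) * (s + |p|) := by
  rw [abs_mul, abs_exp]
  gcongr
  calc |s * sin (p * T) + p * cos (p * T)|
      ≤ |s| * |sin (p * T)| + |p| * |cos (p * T)| := by
        simpa only [abs_mul] using abs_add_le (s * sin (p * T)) (p * cos (p * T))
    _ ≤ |s| * 1 + |p| * 1 := by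
        gcongr
        exacts [abs_sin_le_one _, abs_cos_le_one _]
    _ = s + |p| := by rw [mul_one, mul_one, abs_of_nonneg hs]

lemma exp_neg_mul_mul_add_le_one_add {c : ℝ} (hs : 0 ≤ s) (hT : 1 ≤ T) (hc : 0 ≤ c) :
    exp (-(T * s)) * (s + c) ≤ 1 + c := by
  have hTs : s ≤ T * s := le_mul_of_one_le_left hs hT
  rw [exp_neg, inv_mul_le_iff₀ (exp_pos _)]
  calc s + c ≤ exp (T * s) + exp (T * s) * c := by
        gcongr
        · linarith [add_one_le_exp (T * s)]
        · exact le_mul_of_one_le_left hc (one_le_exp (hs.trans hTs))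
    _ = exp (T * s) * (1 + c) := by ring

lemma abs_integral_exp_neg_mul_mul_sin_le (h : s ^ 2 + p ^ 2 ≠ 0) (hs : 0 ≤ s) (hT : 1 ≤ T) :
    |∫ x in (0 : ℝ)..T, exp (-(x * s)) * sin (p * x)| ≤ (1 + 2 * |p|) * (s ^ 2 + p ^ 2)⁻¹ := by
  have hdenom : 0 ≤ s ^ 2 + p ^ 2 := by positivity
  rw [integral_exp_neg_mul_mul_sin h, abs_div, abs_of_nonneg hdenom, div_eq_mul_inv]
  gcongr
  calc |p - exp (-(T * s)) * (s * sin (p * T) + p * cos (p * T))|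
      ≤ |p| + |exp (-(T * s)) * (s * sin (p * T) + p * cos (p * T))| := abs_sub _ _
    _ ≤ |p| + (1 + |p|) := by
        gcongr
        exact (abs_exp_mul_sin_add_cos_le hs).trans
          (exp_neg_mul_mul_add_le_one_add hs hT (abs_nonneg p))
    _ = 1 + 2 * |p| := by ring

theorem tendsto_integral_exp_neg_mul_mul_sin (hs : 0 < s) :
    Tendsto (fun T : ℝ => ∫ x in (0 : ℝ)..T, exp (-(x * s)) * sin (p * x)) atTop
      (𝓝 (p / (s ^ 2 + p ^ 2))) := by
  have hexp : Tendsto (fun T : ℝ => exp (-(T * s)) * (s + |p|)) atTop (𝓝 0) := by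
    simpa using (tendsto_exp_neg_atTop_nhds_zero.comp
      (tendsto_id.atTop_mul_const hs)).mul_const (s + |p|)
  have hremainder : Tendsto (fun T : ℝ =>
      exp (-(T * s)) * (s * sin (p * T) + p * cos (p * T))) atTop (𝓝 0) :=
    squeeze_zero_norm (fun _ => abs_exp_mul_sin_add_cos_le hs.le) hexp
  have h : s ^ 2 + p ^ 2 ≠ 0 := by positivity
  simpa only [integral_exp_neg_mul_mul_sin h, sub_zero] using
    (hremainder.const_sub p).div_const (s ^ 2 + p ^ 2)

end LaplaceSin

section SineTransform

variable {a p T : ℝ}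

lemma intervalIntegrable_rpow_mul_sin {r : ℝ} (hr : -2 < r) (u v : ℝ) :
    IntervalIntegrable (fun x => x ^ r * sin (p * x)) volume u v := by
  -- Trading `sin` for the continuous function `sinc` gains one power of `x`.
  have hsinc (x : ℝ) (hx : x ≠ 0) : x ^ (r + 1) * (p * sinc (p * x)) = x ^ r * sin (p * x) := by
    rcases eq_or_ne p 0 with rfl | hp
    · simp
    · rw [rpow_add_one hx, sinc_of_ne_zero (mul_ne_zero hp hx)]
      field_simp
  have hcont : Continuous fun x => p * sinc (p * x) := by fun_prop
  have hint := (intervalIntegral.intervalIntegrable_rpow' (a := u) (b := v)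
    (by linarith : -1 < r + 1)).mul_continuousOn hcont.continuousOn
  refine hint.congr_ae (ae_restrict_of_ae ?_)
  filter_upwards [Measure.ae_ne volume 0] with x hx using hsinc x hx

lemma integral_sin_mul_rpow_neg_eq (ha : 0 < a) (ha2 : a < 2) (hT : 0 ≤ T) :
    ∫ x in (0 : ℝ)..T, sin (p * x) * x ^ (-a) =
      (Gamma a)⁻¹ * ∫ s in Ioi (0 : ℝ), s ^ (a - 1) *
        ∫ x in (0 : ℝ)..T, exp (-(x * s)) * sin (p * x) := by
  have hint : IntegrableOn (fun x => x ^ (-a) • sin (p * x)) (Ioc 0 T) :=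
    (intervalIntegrable_iff_integrableOn_Ioc_of_le hT).1
      (intervalIntegrable_rpow_mul_sin (by linarith) 0 T)
  have hpos : ∀ᵐ x ∂volume.restrict (Ioc 0 T), 0 < x :=
    (ae_restrict_mem measurableSet_Ioc).mono fun _ hx => hx.1
  simpa only [intervalIntegral.integral_of_le hT, smul_eq_mul, mul_comm (sin _)] using
    integral_rpow_neg_smul_eq_integral_laplace ha hpos hint

theorem tendsto_integral_rpow_mul_integral_exp_neg_mul_mul_sin (ha : 0 < a) (ha2 : a < 2)
    (hp : p ≠ 0) :
    Tendsto (fun T : ℝ => ∫ s in Ioi (0 : ℝ), s ^ (a - 1) *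
        ∫ x in (0 : ℝ)..T, exp (-(x * s)) * sin (p * x)) atTop
      (𝓝 (∫ s in Ioi (0 : ℝ), s ^ (a - 1) * (p / (s ^ 2 + p ^ 2)))) := by
  have hden (s : ℝ) : s ^ 2 + p ^ 2 ≠ 0 := by positivity
  have hbound : IntegrableOn
      (fun s => (1 + 2 * |p|) * (s ^ (a - 1) * (s ^ 2 + p ^ 2)⁻¹)) (Ioi 0) := by
    simpa only [IntegrableOn, rpow_two] using
      (integrableOn_rpow_mul_inv_rpow_add ha ha2 (by positivity : 0 < p ^ 2)).const_mul _
  refine tendsto_integral_filter_of_dominated_convergence _ (.of_forall fun T => ?_) ?_ hbound ?_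
  · simp_rw [integral_exp_neg_mul_mul_sin (hden _)]
    exact Measurable.aestronglyMeasurable (by fun_prop)
  · filter_upwards [eventually_ge_atTop 1] with T hT
    filter_upwards [ae_restrict_mem measurableSet_Ioi] with s (hs : 0 < s)
    rw [norm_mul, norm_of_nonneg (rpow_nonneg hs.le _), mul_left_comm]
    gcongr
    exact abs_integral_exp_neg_mul_mul_sin_le (hden s) hs.le hT
  · filter_upwards [ae_restrict_mem measurableSet_Ioi] with s (hs : 0 < s)
    exact (tendsto_integral_exp_neg_mul_mul_sin hs).const_mul _

lemma integral_rpow_mul_div_sq_add_sq (ha : 0 < a) (ha2 : a < 2) (hp : 0 < p) :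
    ∫ s in Ioi (0 : ℝ), s ^ (a - 1) * (p / (s ^ 2 + p ^ 2)) =
      π / 2 * p ^ (a - 1) / sin (π * a / 2) := by
  have hpow : p * (p ^ 2) ^ (a / 2 - 1) = p ^ (a - 1) := by
    rw [← rpow_two, ← rpow_mul hp.le, mul_comm, ← rpow_add_one hp.ne']
    congr 1
    ring
  have hmellin := integral_rpow_mul_inv_rpow_add ha ha2 (by positivity : 0 < p ^ 2)
  simp only [rpow_two] at hmellin
  simp_rw [div_eq_mul_inv p, mul_left_comm _ p]
  rw [integral_const_mul, hmellin, ← mul_assoc, hpow, ← mul_div_assoc π]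
  ring

end SineTransform

/-- The sine transform of the homogeneous function `x^λ` for `λ ∈ (-2,0)`:
`lim_{T→∞} ∫₀^T sin(px) x^λ dx = -(π/2) p^{-λ-1} / (sin(πλ/2) Γ(-λ))`. -/
theorem sine_transform_rpow (lam p : ℝ) (hlam : lam ∈ Set.Ioo (-2:ℝ) 0) (hp : 0 < p) :
    Tendsto (fun T : ℝ => ∫ x in (0:ℝ)..T, Real.sin (p * x) * x ^ lam) atTop
      (nhds (-(Real.pi/2) * p ^ (-lam - 1) /
        (Real.sin (Real.pi * lam / 2) * Real.Gamma (-lam)))) := by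
  obtain ⟨a, rfl⟩ : ∃ a, lam = -a := ⟨-lam, (neg_neg lam).symm⟩
  have ha : 0 < a := neg_lt_zero.1 hlam.2
  have ha2 : a < 2 := neg_lt_neg_iff.1 hlam.1
  have hlim := (tendsto_integral_rpow_mul_integral_exp_neg_mul_mul_sin ha ha2 hp.ne').const_mul
    (Gamma a)⁻¹
  rw [integral_rpow_mul_div_sq_add_sq ha ha2 hp] at hlim
  have hval : (Gamma a)⁻¹ * (π / 2 * p ^ (a - 1) / sin (π * a / 2)) =
      -(π / 2) * p ^ (- -a - 1) / (sin (π * -a / 2) * Gamma (- -a)) := by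
    rw [neg_neg, mul_neg, neg_div, sin_neg]
    ring
  rw [← hval]
  refine hlim.congr' ?_
  filter_upwards [eventually_ge_atTop 0] with T hT
  exact (integral_sin_mul_rpow_neg_eq ha ha2 hT).symm
end

section
/- For every λ ∈ (−1, 0) and every p > 0, the improper integral lim_{T→∞} ∫₀^T cos(px) x^λ dx exists and equals (π/2) · p^{−λ−1} / (cos(πλ/2) · Γ(−λ)), where Γ is the Gamma function. -/
open Filter

/-!
Integrating by parts away from `0` shows that `∫₀^∞ x ^ (s - 1) e ^ (-zx) dx`, for `0 < Re s < 1`,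
still converges conditionally on the boundary `Re z = 0`, `z ≠ 0`, to a function which is continuous
on the closed half-plane without `0`. In the open half-plane this function is `z ^ (-s) Γ(s)`, by
analytic continuation from the positive reals, so it is the same on the boundary. At `z = ip` the
real part is `p ^ (-s) cos(πs/2) Γ(s)`, and the reflection formula gives the value in terms of
`Γ(1 - s)`.
-/

section LaplaceIntegral

open Complex MeasureTheory Set
open scoped Topology

theorem norm_mul_cexp_neg_mul_le {w z : ℂ} {x : ℝ} (hz : 0 ≤ z.re) (hx : 0 ≤ x) :
    ‖w * cexp (-(z * x))‖ ≤ ‖w‖ := by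
  have hexp : ‖cexp (-(z * x))‖ ≤ 1 := by
    simpa [norm_exp] using mul_nonneg hz hx
  simpa using mul_le_mul_of_nonneg_left hexp (norm_nonneg w)

theorem norm_mul_mul_cexp_neg_mul_le {w z : ℂ} {r x : ℝ} (hr : 0 < r) (hz : 2 * r ≤ z.re)
    (hx : 0 ≤ x) :
    ‖w * (cexp (-(z * x)) * -x)‖ ≤ r⁻¹ * ‖w * cexp (-(r * x))‖ := by
  have hx_le : x ≤ r⁻¹ * Real.exp (r * x) := by
    rw [inv_mul_eq_div, le_div_iff₀ hr]
    linarith [Real.add_one_le_exp (r * x)]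
  calc ‖w * (cexp (-(z * x)) * -x)‖ = ‖w‖ * (Real.exp (-(z.re * x)) * x) := by
        simp [norm_exp, abs_of_nonneg hx]
    _ ≤ ‖w‖ * (Real.exp (-(2 * r * x)) * (r⁻¹ * Real.exp (r * x))) := by gcongr
    _ = r⁻¹ * (‖w‖ * Real.exp (-(2 * r * x) + r * x)) := by rw [Real.exp_add]; ring
    _ = r⁻¹ * ‖w * cexp (-(r * x))‖ := by
        rw [norm_mul, norm_exp, neg_re, re_ofReal_mul, ofReal_re]
        ring_nf

section Measure

variable {μ : Measure ℝ} {f : ℝ → ℂ}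

theorem continuousOn_integral_mul_cexp_neg_mul (hμ : ∀ᵐ x ∂μ, 0 ≤ x) (hf : Integrable f μ) :
    ContinuousOn (fun z : ℂ ↦ ∫ x, f x * cexp (-(z * x)) ∂μ) {z | 0 ≤ z.re} := by
  refine continuousOn_of_dominated (bound := fun x ↦ ‖f x‖) (fun z _ ↦ ?_) (fun z hz ↦ ?_)
    hf.norm (ae_of_all _ fun x ↦ by fun_prop)
  · exact hf.1.mul (by fun_prop)
  · exact hμ.mono fun x hx ↦ norm_mul_cexp_neg_mul_le hz hx

theorem differentiableOn_integral_mul_cexp_neg_mul (hμ : ∀ᵐ x ∂μ, 0 ≤ x)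
    (hf : ∀ r : ℝ, 0 < r → Integrable (fun x ↦ f x * cexp (-(r * x))) μ) :
    DifferentiableOn ℂ (fun z : ℂ ↦ ∫ x, f x * cexp (-(z * x)) ∂μ) {z | 0 < z.re} := by
  have hf_meas : AEStronglyMeasurable f μ := by
    refine ((hf 1 one_pos).1.mul (g := fun x : ℝ ↦ cexp x) (by fun_prop)).congr ?_
    filter_upwards with x
    simp [mul_assoc, ← Complex.exp_add]
  have hmeas (z : ℂ) : AEStronglyMeasurable (fun x : ℝ ↦ f x * cexp (-(z * x))) μ :=
    hf_meas.mul (by fun_prop)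
  intro z (hz : 0 < z.re)
  have hr : 0 < z.re / 4 := by positivity
  have hint : Integrable (fun x ↦ f x * cexp (-(z * x))) μ := by
    refine (hf z.re hz).norm.mono' (hmeas z) (ae_of_all _ fun x ↦ ?_)
    simp [norm_exp]
  refine (hasDerivAt_integral_of_dominated_loc_of_deriv_le
    (F' := fun w x ↦ f x * (cexp (-(w * x)) * -x))
    (bound := fun x ↦ (z.re / 4)⁻¹ * ‖f x * cexp (-((z.re / 4 : ℝ) * x))‖)
    ((isOpen_re_gt (2 * (z.re / 4))).mem_nhds (by simp; linarith)) (.of_forall hmeas) hint ?_ ?_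
    ((hf _ hr).norm.const_mul _) ?_).2.differentiableAt.differentiableWithinAt
  · exact hf_meas.mul (by fun_prop)
  · exact hμ.mono fun x hx w hw ↦ norm_mul_mul_cexp_neg_mul_le hr (le_of_lt hw) hx
  · refine ae_of_all _ fun x w _ ↦ ?_
    exact (((hasDerivAt_id w).mul_const (x : ℂ)).neg.cexp.const_mul (f x)).congr_deriv (by simp)

end Measure

theorem intervalIntegral_mul_cexp_neg_mul {f f' : ℝ → ℂ} {a b : ℝ} {z : ℂ} (hz : z ≠ 0)
    (hderiv : ∀ x ∈ uIcc a b, HasDerivAt f (f' x) x) (hf' : IntervalIntegrable f' volume a b) :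
    ∫ x in a..b, f x * cexp (-(z * x)) =
      (f a * cexp (-(z * a)) - f b * cexp (-(z * b)) +
        ∫ x in a..b, f' x * cexp (-(z * x))) / z := by
  have hexp (x : ℝ) : HasDerivAt (fun x : ℝ ↦ -cexp (-(z * x)) / z) (cexp (-(z * x))) x := by
    refine (((hasDerivAt_id x).ofReal_comp.const_mul z).neg.cexp.neg.div_const z).congr_deriv ?_
    simp [hz]
  rw [intervalIntegral.integral_mul_deriv_eq_deriv_mul hderiv (fun x _ ↦ hexp x) hf'
    ((by fun_prop : Continuous fun x : ℝ ↦ cexp (-(z * x))).intervalIntegrable a b)]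
  simp only [mul_div_assoc', mul_neg, intervalIntegral.integral_div, intervalIntegral.integral_neg]
  ring

theorem tendsto_intervalIntegral_mul_cexp_neg_mul {f f' : ℝ → ℂ} {c : ℝ} {z : ℂ} (hc : 0 ≤ c)
    (hderiv : ∀ x ∈ Ici c, HasDerivAt f (f' x) x) (hf' : IntegrableOn f' (Ioi c))
    (hlim : Tendsto f atTop (𝓝 0)) (hz : 0 ≤ z.re) (hz0 : z ≠ 0) :
    Tendsto (fun T : ℝ ↦ ∫ x in c..T, f x * cexp (-(z * x))) atTop
      (𝓝 ((f c * cexp (-(z * c)) + ∫ x in Ioi c, f' x * cexp (-(z * x))) / z)) := by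
  have hboundary : Tendsto (fun T : ℝ ↦ f T * cexp (-(z * T))) atTop (𝓝 0) :=
    squeeze_zero_norm' ((eventually_ge_atTop 0).mono fun T hT ↦ norm_mul_cexp_neg_mul_le hz hT)
      (by simpa using hlim.norm)
  have hint : IntegrableOn (fun x : ℝ ↦ f' x * cexp (-(z * x))) (Ioi c) :=
    hf'.norm.mono' (hf'.1.mul (by fun_prop))
      ((ae_restrict_mem measurableSet_Ioi).mono fun x hx ↦
        norm_mul_cexp_neg_mul_le hz (hc.trans (le_of_lt hx)))
  have hlimit := ((tendsto_const_nhds (x := f c * cexp (-(z * c)))).sub hboundary).add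
    (intervalIntegral_tendsto_integral_Ioi c hint tendsto_id) |>.div_const z
  rw [sub_zero] at hlimit
  refine hlimit.congr' ?_
  filter_upwards [eventually_ge_atTop c] with T hT
  exact (intervalIntegral_mul_cexp_neg_mul hz0 (fun x hx ↦ hderiv x (uIcc_of_le hT ▸ hx).1)
    ((intervalIntegrable_iff_integrableOn_Ioc_of_le hT).2
      (hf'.mono_set Ioc_subset_Ioi_self))).symm

theorem exists_continuousOn_tendsto_integral_mul_cexp_neg_mul {f f' : ℝ → ℂ} {c : ℝ} (hc : 0 ≤ c)
    (hf : IntervalIntegrable f volume 0 c) (hderiv : ∀ x ∈ Ici c, HasDerivAt f (f' x) x)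
    (hf' : IntegrableOn f' (Ioi c)) (hlim : Tendsto f atTop (𝓝 0)) :
    ∃ F : ℂ → ℂ, ContinuousOn F ({z | 0 ≤ z.re} \ {0}) ∧ ∀ z ∈ {z : ℂ | 0 ≤ z.re} \ {0},
      Tendsto (fun T : ℝ ↦ ∫ x in 0..T, f x * cexp (-(z * x))) atTop (𝓝 (F z)) := by
  refine ⟨fun z ↦ (∫ x in 0..c, f x * cexp (-(z * x))) +
    (f c * cexp (-(z * c)) + ∫ x in Ioi c, f' x * cexp (-(z * x))) / z, ?_, ?_⟩
  · have hhead : ContinuousOn (fun z : ℂ ↦ ∫ x in 0..c, f x * cexp (-(z * x))) {z | 0 ≤ z.re} := by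
      simp only [intervalIntegral.integral_of_le hc]
      exact continuousOn_integral_mul_cexp_neg_mul
        ((ae_restrict_mem measurableSet_Ioc).mono fun x hx ↦ hx.1.le) hf.1
    have htail : ContinuousOn (fun z : ℂ ↦ ∫ x in Ioi c, f' x * cexp (-(z * x))) {z | 0 ≤ z.re} :=
      continuousOn_integral_mul_cexp_neg_mul
        ((ae_restrict_mem measurableSet_Ioi).mono fun x hx ↦ hc.trans (le_of_lt hx)) hf'
    exact (hhead.mono sdiff_subset).add
      ((ContinuousOn.add (by fun_prop) (htail.mono sdiff_subset)).div continuousOn_id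
        fun z hz ↦ hz.2)
  · rintro z ⟨hz, hz0⟩
    refine ((tendsto_intervalIntegral_mul_cexp_neg_mul hc hderiv hf' hlim hz hz0).const_add
      _).congr' ?_
    filter_upwards [eventually_ge_atTop c] with T hT
    have hfcT : IntervalIntegrable f volume c T := ContinuousOn.intervalIntegrable fun x hx ↦
      (hderiv x (uIcc_of_le hT ▸ hx).1).continuousAt.continuousWithinAt
    exact intervalIntegral.integral_add_adjacent_intervals
      (hf.mul_continuousOn (by fun_prop)) (hfcT.mul_continuousOn (by fun_prop))

end LaplaceIntegral

section GammaIntegral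

open Complex MeasureTheory Set
open scoped Topology

theorem differentiableOn_one_div_cpow (s : ℂ) :
    DifferentiableOn ℂ (fun z : ℂ ↦ (1 / z) ^ s) slitPlane := by
  have hneg : DifferentiableOn ℂ (fun z : ℂ ↦ z ^ (-s)) slitPlane := fun z hz ↦
    (differentiableAt_id.cpow_const hz).differentiableWithinAt
  refine hneg.congr fun z hz ↦ ?_
  rw [one_div, inv_cpow _ _ (slitPlane_arg_ne_pi hz), cpow_neg]

theorem integrableOn_cpow_mul_cexp_neg_mul_Ioi {s z : ℂ} (hs : 0 < s.re) (hz : 0 < z.re) :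
    IntegrableOn (fun x : ℝ ↦ (x : ℂ) ^ (s - 1) * cexp (-(z * x))) (Ioi 0) := by
  refine (integrableOn_rpow_mul_exp_neg_mul_rpow (s := s.re - 1) (by linarith) one_pos hz).mono'
    (by fun_prop) ?_
  filter_upwards [ae_restrict_mem measurableSet_Ioi] with x hx
  simp [norm_cpow_eq_rpow_re_of_pos hx, norm_exp]

theorem integral_cpow_mul_cexp_neg_mul_Ioi {s z : ℂ} (hs : 0 < s.re) (hz : 0 < z.re) :
    ∫ x : ℝ in Ioi 0, (x : ℂ) ^ (s - 1) * cexp (-(z * x)) = (1 / z) ^ s * Gamma s := by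
  have hopen : IsOpen {z : ℂ | 0 < z.re} := isOpen_re_gt 0
  have hleft : AnalyticOnNhd ℂ
      (fun z ↦ ∫ x : ℝ in Ioi 0, (x : ℂ) ^ (s - 1) * cexp (-(z * x))) {z | 0 < z.re} :=
    (differentiableOn_integral_mul_cexp_neg_mul
      ((ae_restrict_mem measurableSet_Ioi).mono fun x hx ↦ le_of_lt hx)
      fun r hr ↦ integrableOn_cpow_mul_cexp_neg_mul_Ioi hs (by simpa using hr)).analyticOnNhd hopen
  have hright : AnalyticOnNhd ℂ (fun z ↦ (1 / z) ^ s * Gamma s) {z | 0 < z.re} :=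
    (((differentiableOn_one_div_cpow s).mono fun z hz ↦ Or.inl hz).mul_const _).analyticOnNhd hopen
  have hfreq : ∃ᶠ z in 𝓝[≠] (1 : ℂ),
      ∫ x : ℝ in Ioi 0, (x : ℂ) ^ (s - 1) * cexp (-(z * x)) = (1 / z) ^ s * Gamma s := by
    have hofReal : Tendsto ofReal (𝓝[>] 1) (𝓝[≠] (1 : ℂ)) := by
      refine tendsto_nhdsWithin_iff.2 ⟨?_, ?_⟩
      · exact (continuous_ofReal.tendsto' 1 1 ofReal_one).mono_left nhdsWithin_le_nhds
      · filter_upwards [self_mem_nhdsWithin] with r hr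
        simpa using (ne_of_gt hr)
    refine hofReal.frequently (Eventually.frequently ?_)
    filter_upwards [self_mem_nhdsWithin] with r hr
    exact integral_cpow_mul_exp_neg_mul_Ioi hs (one_pos.trans hr)
  exact hleft.eqOn_of_preconnected_of_frequently_eq hright
    (convex_halfSpace_re_gt 0).isPreconnected (by simp) hfreq hz

theorem tendsto_ofReal_cpow_atTop_nhds_zero {s : ℂ} (hs : s.re < 0) :
    Tendsto (fun x : ℝ ↦ (x : ℂ) ^ s) atTop (𝓝 0) := by
  refine tendsto_zero_iff_norm_tendsto_zero.2 ?_
  refine (neg_neg s.re ▸ tendsto_rpow_neg_atTop (neg_pos.2 hs)).congr' ?_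
  filter_upwards [eventually_gt_atTop 0] with x hx
  exact (norm_cpow_eq_rpow_re_of_pos hx s).symm

theorem tendsto_integral_cpow_mul_cexp_neg_mul {s z : ℂ} (hs0 : 0 < s.re) (hs1 : s.re < 1)
    (hz : 0 ≤ z.re) (hz0 : z ≠ 0) :
    Tendsto (fun T : ℝ ↦ ∫ x in 0..T, (x : ℂ) ^ (s - 1) * cexp (-(z * x))) atTop
      (𝓝 ((1 / z) ^ s * Gamma s)) := by
  have hs_neg : (s - 1).re < 0 := by simpa using hs1
  have hs_ne : s - 1 ≠ 0 := fun h ↦ by simp [h] at hs_neg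
  obtain ⟨F, hF_cont, hF_lim⟩ := exists_continuousOn_tendsto_integral_mul_cexp_neg_mul zero_le_one
    (intervalIntegral.intervalIntegrable_cpow' (by simpa using hs0))
    (fun x hx ↦ hasDerivAt_ofReal_cpow_const (zero_lt_one.trans_le hx).ne' hs_ne)
    ((integrableOn_Ioi_cpow_of_lt (by simp; linarith) one_pos).const_mul _)
    (tendsto_ofReal_cpow_atTop_nhds_zero hs_neg)
  have hsub : {w : ℂ | 0 < w.re} ⊆ {w | 0 ≤ w.re} \ {0} := fun w (hw : 0 < w.re) ↦
    ⟨hw.le, fun h ↦ by simp [mem_singleton_iff.1 h] at hw⟩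
  have hclosure : {w : ℂ | 0 ≤ w.re} \ {0} ⊆ closure {w | 0 < w.re} := by
    rw [closure_setOfPred_lt_re]
    exact sdiff_subset
  have hslit : {w : ℂ | 0 ≤ w.re} \ {0} ⊆ slitPlane := by
    rintro w ⟨hw : 0 ≤ w.re, hw0⟩
    rcases hw.lt_or_eq with hre | hre
    · exact .inl hre
    · exact .inr fun him ↦ hw0 (Complex.ext hre.symm him)
  have hF_eq : EqOn F (fun w ↦ (1 / w) ^ s * Gamma s) {w | 0 < w.re} := by
    intro w hw
    refine tendsto_nhds_unique (hF_lim w (hsub hw)) ?_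
    simpa only [integral_cpow_mul_cexp_neg_mul_Ioi hs0 hw, id] using
      intervalIntegral_tendsto_integral_Ioi 0
        (integrableOn_cpow_mul_cexp_neg_mul_Ioi hs0 hw) tendsto_id
  have hG_cont := ((differentiableOn_one_div_cpow s).mono hslit).continuousOn.mul_const (Gamma s)
  have hFz : F z = (1 / z) ^ s * Gamma s :=
    hF_eq.of_subset_closure hF_cont hG_cont hsub hclosure ⟨hz, hz0⟩
  exact hFz ▸ hF_lim z ⟨hz, hz0⟩

theorem re_one_div_ofReal_mul_I_cpow {p : ℝ} (hp : 0 < p) (s : ℝ) :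
    ((1 / (p * I)) ^ (s : ℂ)).re = p ^ (-s) * Real.cos (Real.pi * s / 2) := by
  have hpolar : 1 / (p * I) = (p⁻¹ : ℝ) * -I := by
    simp [mul_comm]
  rw [cpow_ofReal_re, hpolar, arg_real_mul _ (inv_pos.2 hp), arg_neg_I, norm_mul, norm_neg, norm_I,
    mul_one, norm_real, Real.norm_of_nonneg (inv_pos.2 hp).le, Real.inv_rpow hp.le,
    Real.rpow_neg hp.le, ← Real.cos_neg]
  ring_nf

theorem re_ofReal_cpow_mul_cexp_neg_mul_I {x : ℝ} (hx : 0 ≤ x) (s p : ℝ) :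
    ((x : ℂ) ^ (s : ℂ) * cexp (-(p * I * x))).re = Real.cos (p * x) * x ^ s := by
  rw [← ofReal_cpow hx, re_ofReal_mul, show -(p * I * x) = (-(p * x) : ℝ) * I by push_cast; ring,
    exp_ofReal_mul_I_re, Real.cos_neg, mul_comm]

theorem tendsto_integral_cos_mul_rpow {s p : ℝ} (hs0 : 0 < s) (hs1 : s < 1) (hp : 0 < p) :
    Tendsto (fun T : ℝ ↦ ∫ x in 0..T, Real.cos (p * x) * x ^ (s - 1)) atTop
      (𝓝 (p ^ (-s) * (Real.cos (Real.pi * s / 2) * Real.Gamma s))) := by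
  have hcomplex := (continuous_re.tendsto _).comp (tendsto_integral_cpow_mul_cexp_neg_mul
    (s := s) (z := p * I) hs0 hs1 (by simp) (by simp [hp.ne']))
  rw [Gamma_ofReal, re_mul_ofReal, re_one_div_ofReal_mul_I_cpow hp, mul_assoc] at hcomplex
  refine hcomplex.congr' ?_
  filter_upwards [eventually_ge_atTop 0] with T hT
  have hint : IntervalIntegrable (fun x : ℝ ↦ (x : ℂ) ^ ((s : ℂ) - 1) * cexp (-(p * I * x)))
      volume 0 T :=
    (intervalIntegral.intervalIntegrable_cpow' (by simpa using hs0)).mul_continuousOn (by fun_prop)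
  refine (intervalIntegral.intervalIntegral_re hint).symm.trans ?_
  refine intervalIntegral.integral_congr fun x hx ↦ ?_
  rw [uIcc_of_le hT] at hx
  simpa using re_ofReal_cpow_mul_cexp_neg_mul_I hx.1 (s - 1) p

theorem cos_mul_Gamma_eq_div {s : ℝ} (hs : Real.sin (Real.pi * s) ≠ 0) :
    Real.cos (Real.pi * s / 2) * Real.Gamma s =
      Real.pi / 2 / (Real.sin (Real.pi * s / 2) * Real.Gamma (1 - s)) := by
  have hprod : Real.Gamma s * Real.Gamma (1 - s) * Real.sin (Real.pi * s) = Real.pi := by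
    rw [Real.Gamma_mul_Gamma_one_sub, div_mul_cancel₀ _ hs]
  have hdouble : Real.sin (Real.pi * s) =
      2 * Real.sin (Real.pi * s / 2) * Real.cos (Real.pi * s / 2) := by
    rw [← Real.sin_two_mul, mul_div_cancel₀ _ two_ne_zero]
  have hGamma : Real.Gamma (1 - s) ≠ 0 := fun h ↦
    Real.pi_ne_zero (by rw [← hprod, h, mul_zero, zero_mul])
  have hsin : Real.sin (Real.pi * s / 2) ≠ 0 := fun h ↦ hs (by simp [hdouble, h])
  rw [eq_div_iff (mul_ne_zero hsin hGamma)]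
  linear_combination hprod / 2 - Real.Gamma s * Real.Gamma (1 - s) / 2 * hdouble

end GammaIntegral

/-- The cosine transform of the homogeneous function `x^λ` for `λ ∈ (-1,0)`:
`lim_{T→∞} ∫₀^T cos(px) x^λ dx = (π/2) p^{-λ-1} / (cos(πλ/2) Γ(-λ))`. -/
theorem cosine_transform_rpow (lam p : ℝ) (hlam : lam ∈ Set.Ioo (-1:ℝ) 0) (hp : 0 < p) :
    Tendsto (fun T : ℝ => ∫ x in (0:ℝ)..T, Real.cos (p * x) * x ^ lam) atTop
      (nhds ((Real.pi/2) * p ^ (-lam - 1) /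
        (Real.cos (Real.pi * lam / 2) * Real.Gamma (-lam)))) := by
  have hs0 : 0 < lam + 1 := by linarith [hlam.1]
  have hs1 : lam + 1 < 1 := by linarith [hlam.2]
  have hsin : Real.sin (Real.pi * (lam + 1)) ≠ 0 :=
    (Real.sin_pos_of_pos_of_lt_pi (by positivity) (mul_lt_of_lt_one_right Real.pi_pos hs1)).ne'
  have hlimit := tendsto_integral_cos_mul_rpow hs0 hs1 hp
  rw [cos_mul_Gamma_eq_div hsin, add_sub_cancel_right] at hlimit
  have hshift : Real.sin (Real.pi * (lam + 1) / 2) = Real.cos (Real.pi * lam / 2) := by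
    rw [← Real.sin_add_pi_div_two]
    ring_nf
  convert hlimit using 2
  rw [hshift, neg_add', show 1 - (lam + 1) = -lam by ring]
  ring
end

section
/- Let α ∈ ℝ and let ψ ∈ L^{2,∞}(ℝ₊) satisfy ∫₀^∞ p ψ(p) dp = 0. Define (L̃_D ψ)(p) := p² ψ(p) + (α − 1/4) ∫₀^∞ min(p,q) ψ(q) dq (the inner integral converges absolutely). Then for every x > 0: −(𝓕_D ψ)''(x) + (α − 1/4) x⁻² (𝓕_D ψ)(x) = √(2/π) ∫₀^∞ sin(px) (L̃_D ψ)(p) dp, the last integral converging absolutely; i.e., the sine transform intertwines the momentum-space Dirichlet Bessel operator with the Bessel differential expression L_α. -/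
open MeasureTheory

/-- `ψ ∈ L^{2,∞}(ℝ₊)`: measurable with `∫₀^∞ pⁿ |ψ(p)|² dp < ∞` for all `n`. -/
def MemL2Inf (ψ : ℝ → ℂ) : Prop :=
  AEStronglyMeasurable ψ (volume.restrict (Set.Ioi 0)) ∧
  ∀ n : ℕ, IntegrableOn (fun p : ℝ => p ^ n * ‖ψ p‖^2) (Set.Ioi 0)

/-- The sine transform `(𝓕_D ψ)(x) = √(2/π) ∫₀^∞ sin(px) ψ(p) dp`. -/
noncomputable def sineTransform (ψ : ℝ → ℂ) : ℝ → ℂ :=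
  fun x => (Real.sqrt (2 / Real.pi) : ℂ) * ∫ p in Set.Ioi (0:ℝ), (Real.sin (p * x) : ℂ) * ψ p

/-- The momentum-space Dirichlet Bessel operator
`(L̃_D ψ)(p) = p² ψ(p) + (α - 1/4) ∫₀^∞ min(p,q) ψ(q) dq`. -/
noncomputable def momentumBesselD (α : ℝ) (ψ : ℝ → ℂ) : ℝ → ℂ :=
  fun p => (p : ℂ)^2 * ψ p
    + ((α : ℂ) - 1/4) * ∫ q in Set.Ioi (0:ℝ), ((min p q : ℝ) : ℂ) * ψ q

/-!
The sine transform turns multiplication by `p²` into `-d²/dx²`, and, formally, the inverse of the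
Dirichlet operator `-d²/dp²`, whose Green kernel is `min p q`, into multiplication by `x⁻²`. This
kernel is not integrable in `p`, but the vanishing first moment allows it to be replaced by
`min p q - q = -max (q - p) 0`, which vanishes for `p ≥ q`. Then Fubini applies and what is left is
the elementary integral of `sin (p x) (q - p)` over `0 ≤ p ≤ q`.
-/

section

variable {E : Type*} [NormedAddCommGroup E] {f : ℝ → E} {μ : Measure ℝ}

theorem integrableOn_of_integrableOn_one_add_sq_mul_norm_sq {s : Set ℝ}
    (hf : AEStronglyMeasurable f (volume.restrict s))
    (h : IntegrableOn (fun p => (1 + p ^ 2) * ‖f p‖ ^ 2) s) : IntegrableOn f s := by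
  refine Integrable.mono' (integrable_inv_one_add_sq.integrableOn.add h) hf (.of_forall fun p => ?_)
  have amgm : (1 + p ^ 2)⁻¹ + (1 + p ^ 2) * ‖f p‖ ^ 2 - ‖f p‖
      = (1 + p ^ 2)⁻¹ * ((1 - (1 + p ^ 2) * ‖f p‖) ^ 2 + (1 + p ^ 2) * ‖f p‖) := by
    field_simp
    ring
  exact sub_nonneg.1 (amgm ▸ by positivity)

variable [NormedSpace ℝ E]

theorem integrable_smul_of_integrable_sq_smul (hf : Integrable f μ)
    (hf₂ : Integrable (fun p => p ^ 2 • f p) μ) : Integrable (fun p => p • f p) μ := by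
  refine (hf.norm.add hf₂.norm).mono' (by fun_prop) (.of_forall fun p => ?_)
  have hp : |p| ≤ 1 + p ^ 2 := abs_le.2 ⟨by nlinarith, by nlinarith⟩
  simp only [Pi.add_apply, norm_smul, Real.norm_eq_abs, abs_sq]
  nlinarith [mul_le_mul_of_nonneg_right hp (norm_nonneg (f p))]

theorem integrable_sin_mul_smul (hf : Integrable f μ) (x : ℝ) :
    Integrable (fun p => Real.sin (p * x) • f p) μ :=
  hf.bdd_smul 1 (by fun_prop) (.of_forall fun p => Real.abs_sin_le_one (p * x))

theorem integrable_min_smul (hf : Integrable f μ) (hf₁ : Integrable (fun q => q • f q) μ) (p : ℝ) :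
    Integrable (fun q => min p q • f q) μ := by
  refine ((hf.norm.const_mul |p|).add hf₁.norm).mono' (by fun_prop) (.of_forall fun q => ?_)
  have hmin : |min p q| ≤ |p| + |q| :=
    abs_min_le_max_abs_abs.trans (max_le_add_of_nonneg (abs_nonneg p) (abs_nonneg q))
  simpa only [Pi.add_apply, norm_smul, Real.norm_eq_abs, add_mul] using
    mul_le_mul_of_nonneg_right hmin (norm_nonneg (f q))

theorem hasDerivAt_integral_comp_mul_smul {g g' : ℝ → ℝ} {C C' : ℝ}
    (hg : ∀ t, HasDerivAt g (g' t) t) (hC : ∀ t, |g t| ≤ C) (hC' : ∀ t, |g' t| ≤ C')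
    (hf : Integrable f μ) (hf₁ : Integrable (fun p => p • f p) μ) (x : ℝ) :
    HasDerivAt (fun y => ∫ p, g (p * y) • f p ∂μ) (∫ p, g' (p * x) • p • f p ∂μ) x := by
  have hg_cont : Continuous g := continuous_iff_continuousAt.2 fun t => (hg t).continuousAt
  have hg'_meas : Measurable g' := funext (fun t => (hg t).deriv) ▸ measurable_deriv g
  have hmeas (y : ℝ) : AEStronglyMeasurable (fun p => g (p * y)) μ := by fun_prop
  refine (hasDerivAt_integral_of_dominated_loc_of_deriv_le (s := Set.univ)
    (bound := fun p => C' * ‖p • f p‖) (F' := fun y p => g' (p * y) • p • f p)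
    Filter.univ_mem (.of_forall fun y => (hmeas y).smul hf.1)
    (hf.bdd_smul C (hmeas x) (.of_forall fun p => hC _))
    ((hg'_meas.comp (measurable_id.mul_const x)).aestronglyMeasurable.smul hf₁.1)
    (.of_forall fun p y _ => ?_) (hf₁.norm.const_mul C') (.of_forall fun p y _ => ?_)).2
  · rw [norm_smul]
    exact mul_le_mul_of_nonneg_right (hC' _) (norm_nonneg _)
  · rw [smul_smul]
    exact ((hg (p * y)).comp y (hasDerivAt_const_mul p)).smul_const (f p)

theorem max_sub_eq_zero_of_mem_Ioi_sdiff_Ioc {a p q : ℝ} (hp : p ∈ Set.Ioi a \ Set.Ioc a q) :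
    max (q - p) 0 = 0 :=
  max_eq_right (sub_nonpos.2 (not_le.1 fun hpq => hp.2 ⟨hp.1, hpq⟩).le)

theorem integrableOn_Ioi_max_sub (a q : ℝ) :
    IntegrableOn (fun p => max (q - p) 0) (Set.Ioi a) := by
  have hcont : Continuous fun p : ℝ => max (q - p) 0 := by fun_prop
  exact (hcont.integrableOn_Ioc (a := a) (b := q)).of_forall_sdiff_eq_zero measurableSet_Ioi
    fun p hp => max_sub_eq_zero_of_mem_Ioi_sdiff_Ioc hp

theorem integral_Ioi_mul_max_sub (g : ℝ → ℝ) {a q : ℝ} (haq : a ≤ q) :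
    ∫ p in Set.Ioi a, g p * max (q - p) 0 = ∫ p in a..q, g p * (q - p) := by
  rw [setIntegral_eq_of_subset_of_forall_sdiff_eq_zero measurableSet_Ioi Set.Ioc_subset_Ioi_self
    fun p hp => by rw [max_sub_eq_zero_of_mem_Ioi_sdiff_Ioc hp, mul_zero],
    intervalIntegral.integral_of_le haq]
  refine setIntegral_congr_fun measurableSet_Ioc fun p hp => ?_
  simp only [max_eq_left (sub_nonneg.2 hp.2)]

theorem integral_Ioi_max_sub {q : ℝ} (hq : 0 ≤ q) :
    ∫ p in Set.Ioi (0 : ℝ), max (q - p) 0 = q ^ 2 / 2 := by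
  have h := integral_Ioi_mul_max_sub (fun _ => 1) hq
  simp only [one_mul] at h
  rw [h, intervalIntegral.integral_comp_sub_left (fun p => p), integral_id]
  ring

theorem integral_sin_mul_sub {x : ℝ} (hx : x ≠ 0) (q : ℝ) :
    ∫ p in (0 : ℝ)..q, Real.sin (p * x) * (q - p) = q / x - Real.sin (q * x) / x ^ 2 := by
  have hprim (p : ℝ) : HasDerivAt
      (fun p => -((q - p) * Real.cos (p * x)) / x - Real.sin (p * x) / x ^ 2)
      (Real.sin (p * x) * (q - p)) p := by
    have hpx : HasDerivAt (fun p : ℝ => p * x) x p := hasDerivAt_mul_const x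
    refine (((((hasDerivAt_id' p).const_sub q).mul hpx.cos).neg.div_const x).sub
      (hpx.sin.div_const (x ^ 2))).congr_deriv ?_
    field_simp
    ring
  have hcont : Continuous fun p => Real.sin (p * x) * (q - p) := by fun_prop
  rw [intervalIntegral.integral_eq_sub_of_hasDerivAt (fun p _ => hprim p)
    (hcont.intervalIntegrable _ _)]
  simp only [sub_self, sub_zero, zero_mul, neg_zero, zero_div, Real.sin_zero, Real.cos_zero]
  ring

theorem integrable_prod_max_sub_smul (hf : AEStronglyMeasurable f (volume.restrict (Set.Ioi 0)))
    (hf₂ : IntegrableOn (fun q => q ^ 2 • f q) (Set.Ioi 0)) :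
    Integrable (fun z : ℝ × ℝ => max (z.2 - z.1) 0 • f z.2)
      ((volume.restrict (Set.Ioi 0)).prod (volume.restrict (Set.Ioi 0))) := by
  have hcont : Continuous fun z : ℝ × ℝ => max (z.2 - z.1) 0 := by fun_prop
  refine (integrable_prod_iff' (hcont.aestronglyMeasurable.smul hf.comp_snd)).2
    ⟨.of_forall fun q => (integrableOn_Ioi_max_sub 0 q).smul_const (f q), ?_⟩
  refine (integrableOn_congr_fun (fun q hq => ?_) measurableSet_Ioi).2 (hf₂.norm.div_const 2)
  calc ∫ p in Set.Ioi (0 : ℝ), ‖max (q - p) 0 • f q‖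
      = (∫ p in Set.Ioi (0 : ℝ), max (q - p) 0) * ‖f q‖ := by
        simp only [norm_smul, Real.norm_of_nonneg (le_max_right _ (0 : ℝ)), integral_mul_const]
    _ = ‖q ^ 2 • f q‖ / 2 := by
        rw [integral_Ioi_max_sub (le_of_lt hq), norm_smul, Real.norm_of_nonneg (sq_nonneg q)]
        ring

theorem integral_sin_mul_smul_max_sub_smul [CompleteSpace E] {x q : ℝ} (hx : x ≠ 0) (hq : 0 ≤ q)
    (v : E) :
    ∫ p in Set.Ioi (0 : ℝ), Real.sin (p * x) • max (q - p) 0 • v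
      = x⁻¹ • q • v - (x ^ 2)⁻¹ • Real.sin (q * x) • v := by
  simp only [smul_smul]
  rw [integral_smul_const, integral_Ioi_mul_max_sub (fun p => Real.sin (p * x)) hq,
    integral_sin_mul_sub hx, sub_smul, div_eq_inv_mul, div_eq_inv_mul]

/-- The Green operator of `-d²/dp²` on the half-line with Dirichlet condition at `0`, that is, the
nonlocal term of the momentum-space Bessel operator. -/
noncomputable def dirichletGreen (f : ℝ → E) (p : ℝ) : E :=
  ∫ q in Set.Ioi (0 : ℝ), min p q • f q

theorem dirichletGreen_eq_neg_integral_max_sub_smul (hf : IntegrableOn f (Set.Ioi 0))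
    (hf₁ : IntegrableOn (fun q => q • f q) (Set.Ioi 0))
    (hmom : ∫ q in Set.Ioi (0 : ℝ), q • f q = 0) (p : ℝ) :
    dirichletGreen f p = -∫ q in Set.Ioi (0 : ℝ), max (q - p) 0 • f q := by
  have hker (q : ℝ) : max (q - p) 0 • f q = q • f q - min p q • f q := by
    rw [← sub_smul, ← max_sub_sub_left, sub_self]
  simp only [hker]
  rw [integral_sub hf₁ (integrable_min_smul hf hf₁ p), hmom, zero_sub, neg_neg, dirichletGreen]

theorem integrable_prod_sin_mul_smul_max_sub_smul (hf : IntegrableOn f (Set.Ioi 0))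
    (hf₂ : IntegrableOn (fun q => q ^ 2 • f q) (Set.Ioi 0)) (x : ℝ) :
    Integrable (fun z : ℝ × ℝ => Real.sin (z.1 * x) • max (z.2 - z.1) 0 • f z.2)
      ((volume.restrict (Set.Ioi 0)).prod (volume.restrict (Set.Ioi 0))) :=
  (integrable_prod_max_sub_smul hf.1 hf₂).bdd_smul 1 (by fun_prop)
    (.of_forall fun z => Real.abs_sin_le_one (z.1 * x))

theorem integrableOn_sin_mul_smul_dirichletGreen (hf : IntegrableOn f (Set.Ioi 0))
    (hf₂ : IntegrableOn (fun q => q ^ 2 • f q) (Set.Ioi 0))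
    (hmom : ∫ q in Set.Ioi (0 : ℝ), q • f q = 0) (x : ℝ) :
    IntegrableOn (fun p => Real.sin (p * x) • dirichletGreen f p) (Set.Ioi 0) := by
  have hf₁ := integrable_smul_of_integrable_sq_smul hf hf₂
  simp only [dirichletGreen_eq_neg_integral_max_sub_smul hf hf₁ hmom]
  exact integrable_sin_mul_smul (integrable_prod_max_sub_smul hf.1 hf₂).integral_prod_left.neg x

theorem integral_sin_mul_smul_dirichletGreen [CompleteSpace E] (hf : IntegrableOn f (Set.Ioi 0))
    (hf₂ : IntegrableOn (fun q => q ^ 2 • f q) (Set.Ioi 0))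
    (hmom : ∫ q in Set.Ioi (0 : ℝ), q • f q = 0) {x : ℝ} (hx : x ≠ 0) :
    ∫ p in Set.Ioi (0 : ℝ), Real.sin (p * x) • dirichletGreen f p
      = (x ^ 2)⁻¹ • ∫ q in Set.Ioi (0 : ℝ), Real.sin (q * x) • f q := by
  have hf₁ := integrable_smul_of_integrable_sq_smul hf hf₂
  calc ∫ p in Set.Ioi (0 : ℝ), Real.sin (p * x) • dirichletGreen f p
      = -∫ p in Set.Ioi (0 : ℝ), ∫ q in Set.Ioi (0 : ℝ),
          Real.sin (p * x) • max (q - p) 0 • f q := by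
        simp only [dirichletGreen_eq_neg_integral_max_sub_smul hf hf₁ hmom, smul_neg,
          integral_neg, integral_smul]
    _ = -∫ q in Set.Ioi (0 : ℝ), ∫ p in Set.Ioi (0 : ℝ),
          Real.sin (p * x) • max (q - p) 0 • f q := by
        rw [integral_integral_swap (integrable_prod_sin_mul_smul_max_sub_smul hf hf₂ x)]
    _ = -∫ q in Set.Ioi (0 : ℝ), (x⁻¹ • q • f q - (x ^ 2)⁻¹ • Real.sin (q * x) • f q) := by
        rw [setIntegral_congr_fun measurableSet_Ioi fun q hq =>
          integral_sin_mul_smul_max_sub_smul hx (le_of_lt hq) (f q)]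
    _ = (x ^ 2)⁻¹ • ∫ q in Set.Ioi (0 : ℝ), Real.sin (q * x) • f q := by
        rw [integral_sub (hf₁.fun_smul x⁻¹) ((integrable_sin_mul_smul hf x).fun_smul (x ^ 2)⁻¹),
          integral_smul, integral_smul, hmom, smul_zero, zero_sub, neg_neg]

end

theorem MemL2Inf.integrableOn_pow_smul {ψ : ℝ → ℂ} (hψ : MemL2Inf ψ) (n : ℕ) :
    IntegrableOn (fun p => p ^ n • ψ p) (Set.Ioi 0) := by
  have hcont : Continuous fun p : ℝ => p ^ n := by fun_prop
  refine integrableOn_of_integrableOn_one_add_sq_mul_norm_sq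
    (hcont.aestronglyMeasurable.smul hψ.1) ?_
  refine ((hψ.2 (2 * n)).add (hψ.2 (2 * n + 2))).congr (.of_forall fun p => ?_)
  simp only [Pi.add_apply, norm_smul, mul_pow, Real.norm_eq_abs, sq_abs]
  ring

theorem sineTransform_apply (ψ : ℝ → ℂ) (x : ℝ) :
    sineTransform ψ x
      = Real.sqrt (2 / Real.pi) • ∫ p in Set.Ioi (0 : ℝ), Real.sin (p * x) • ψ p := by
  simp only [sineTransform, Complex.real_smul]

theorem momentumBesselD_apply (α : ℝ) (ψ : ℝ → ℂ) (p : ℝ) :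
    momentumBesselD α ψ p = p ^ 2 • ψ p + ((α : ℂ) - 1 / 4) • dirichletGreen ψ p := by
  simp only [momentumBesselD, dirichletGreen, Complex.real_smul, Complex.ofReal_pow, smul_eq_mul]

theorem deriv_deriv_sineTransform {ψ : ℝ → ℂ} (hψ : IntegrableOn ψ (Set.Ioi 0))
    (hψ₂ : IntegrableOn (fun p => p ^ 2 • ψ p) (Set.Ioi 0)) (x : ℝ) :
    deriv (deriv (sineTransform ψ)) x = -sineTransform (fun p => p ^ 2 • ψ p) x := by
  have hψ₁ := integrable_smul_of_integrable_sq_smul hψ hψ₂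
  have hψ₁₁ : IntegrableOn (fun p => p • p • ψ p) (Set.Ioi 0) := by
    simpa only [smul_smul, ← sq] using hψ₂
  have hsin (y : ℝ) := hasDerivAt_integral_comp_mul_smul Real.hasDerivAt_sin Real.abs_sin_le_one
    Real.abs_cos_le_one hψ hψ₁ y
  have hcos := hasDerivAt_integral_comp_mul_smul Real.hasDerivAt_cos Real.abs_cos_le_one
    (fun t => (abs_neg _).trans_le (Real.abs_sin_le_one t)) hψ₁ hψ₁₁ x
  have hderiv : deriv (sineTransform ψ) = fun y =>
      Real.sqrt (2 / Real.pi) • ∫ p in Set.Ioi (0 : ℝ), Real.cos (p * y) • p • ψ p := by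
    ext y
    rw [funext (sineTransform_apply ψ)]
    exact ((hsin y).fun_const_smul _).deriv
  rw [hderiv, (hcos.fun_const_smul (Real.sqrt (2 / Real.pi))).deriv, sineTransform_apply]
  simp only [neg_smul, integral_neg, smul_neg, sq, mul_smul]

theorem sineTransform_dirichletGreen {ψ : ℝ → ℂ} (hψ : IntegrableOn ψ (Set.Ioi 0))
    (hψ₂ : IntegrableOn (fun p => p ^ 2 • ψ p) (Set.Ioi 0))
    (hmom : ∫ p in Set.Ioi (0 : ℝ), p • ψ p = 0) {x : ℝ} (hx : x ≠ 0) :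
    sineTransform (dirichletGreen ψ) x = (x ^ 2)⁻¹ • sineTransform ψ x := by
  rw [sineTransform_apply, sineTransform_apply, integral_sin_mul_smul_dirichletGreen hψ hψ₂ hmom hx,
    smul_comm]

theorem sineTransform_intertwines_besselD_general (α : ℝ) (ψ : ℝ → ℂ)
    (hψ : IntegrableOn ψ (Set.Ioi 0))
    (hψ₂ : IntegrableOn (fun p : ℝ => (p : ℂ) ^ 2 * ψ p) (Set.Ioi 0))
    (hmom : ∫ p in Set.Ioi (0 : ℝ), (p : ℂ) * ψ p = 0) :
    (∀ p : ℝ, IntegrableOn (fun q : ℝ => ((min p q : ℝ) : ℂ) * ψ q) (Set.Ioi 0)) ∧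
    ∀ x : ℝ, x ≠ 0 →
      IntegrableOn (fun p : ℝ => (Real.sin (p * x) : ℂ) * momentumBesselD α ψ p) (Set.Ioi 0) ∧
      -(deriv (deriv (sineTransform ψ)) x)
          + ((α : ℂ) - 1 / 4) * ((x : ℂ) ^ 2)⁻¹ * sineTransform ψ x
        = (Real.sqrt (2 / Real.pi) : ℂ) *
            ∫ p in Set.Ioi (0 : ℝ), (Real.sin (p * x) : ℂ) * momentumBesselD α ψ p := by
  simp only [← Complex.ofReal_pow, ← Complex.real_smul] at hψ₂ hmom ⊢
  have hψ₁ := integrable_smul_of_integrable_sq_smul hψ hψ₂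
  refine ⟨integrable_min_smul hψ hψ₁, fun x hx => ?_⟩
  have hsq := integrable_sin_mul_smul hψ₂ x
  have hgreen := (integrableOn_sin_mul_smul_dirichletGreen hψ hψ₂ hmom x).fun_smul ((α : ℂ) - 1 / 4)
  have hsplit (p : ℝ) : Real.sin (p * x) • momentumBesselD α ψ p
      = Real.sin (p * x) • p ^ 2 • ψ p
        + ((α : ℂ) - 1 / 4) • Real.sin (p * x) • dirichletGreen ψ p := by
    rw [momentumBesselD_apply, smul_add, smul_comm (Real.sin _) ((α : ℂ) - 1 / 4)]
  simp only [hsplit]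
  refine ⟨hsq.add hgreen, ?_⟩
  rw [integral_add hsq hgreen, integral_smul, smul_add, smul_comm _ ((α : ℂ) - 1 / 4),
    ← sineTransform_apply, ← sineTransform_apply, deriv_deriv_sineTransform hψ hψ₂,
    sineTransform_dirichletGreen hψ hψ₂ hmom hx, neg_neg, Complex.real_smul, smul_eq_mul, mul_assoc,
    Complex.ofReal_inv, Complex.ofReal_pow]

/-- The sine transform intertwines the momentum-space Dirichlet Bessel operator with the
Bessel differential expression `L_α`, on minimal-domain vectors. -/
theorem sineTransform_intertwines_besselD (α : ℝ) (ψ : ℝ → ℂ) (hψ : MemL2Inf ψ)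
    (hmom : ∫ p in Set.Ioi (0:ℝ), (p : ℂ) * ψ p = 0) :
    (∀ p > (0:ℝ), IntegrableOn (fun q : ℝ => ((min p q : ℝ) : ℂ) * ψ q) (Set.Ioi 0)) ∧
    ∀ x > (0:ℝ),
      IntegrableOn (fun p : ℝ => (Real.sin (p * x) : ℂ) * momentumBesselD α ψ p)
        (Set.Ioi 0) ∧
      -(deriv (deriv (sineTransform ψ)) x)
          + ((α : ℂ) - 1/4) * ((x : ℂ)^2)⁻¹ * sineTransform ψ x
        = (Real.sqrt (2 / Real.pi) : ℂ) *
            ∫ p in Set.Ioi (0:ℝ), (Real.sin (p * x) : ℂ) * momentumBesselD α ψ p := by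
  obtain ⟨hmin, h⟩ := sineTransform_intertwines_besselD_general α ψ
    (by simpa using hψ.integrableOn_pow_smul 0) (by simpa using hψ.integrableOn_pow_smul 2) hmom
  exact ⟨fun p _ => hmin p, fun x hx => h x hx.ne'⟩
end
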